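/- arXiv:2305.05366 — 2 statements merged into one kernel-verified Lean document; each statement's English description precedes it below -/
import Mathlib

section
/- Let N ≥ 1 and let H : ℝ → M_N(ℂ) be a differentiable matrix-valued function such that for every t, H(t) is Hermitian and invertible. Let A : ℝ → M_N(ℂ) be differentiable and satisfy the ODE A'(t) = −(1/2) A(t) H'(t) H(t)⁻¹ for all t, together with the initial condition A(0) H(0) A(0)* = Id (where B* denotes the conjugate transpose of B). Then A(t) H(t) A(t)* = Id for all t ∈ ℝ. -/
open Matrix

lemma entry_mul {N : ℕ} {P Q P' Q' : ℝ → Matrix (Fin N) (Fin N) ℂ}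
    (hP : ∀ t i j, HasDerivAt (fun s => P s i j) (P' t i j) t)
    (hQ : ∀ t i j, HasDerivAt (fun s => Q s i j) (Q' t i j) t) :
    ∀ t i j, HasDerivAt (fun s => (P s * Q s) i j) ((P' t * Q t + P t * Q' t) i j) t := by
  intro t i j
  simp only [Matrix.mul_apply, Matrix.add_apply, ← Finset.sum_add_distrib]
  exact HasDerivAt.fun_sum fun k _ => (hP t i k).mul (hQ t k j)

lemma entry_star {N : ℕ} {P P' : ℝ → Matrix (Fin N) (Fin N) ℂ}
    (hP : ∀ t i j, HasDerivAt (fun s => P s i j) (P' t i j) t) :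
    ∀ t i j, HasDerivAt (fun s => (P s)ᴴ i j) ((P' t)ᴴ i j) t := by
  intro t i j
  simp only [Matrix.conjTranspose_apply]
  exact (hP t j i).star

/-- If `H : ℝ → M_N(ℂ)` is differentiable with `H t` Hermitian and invertible
for all `t`, and `A : ℝ → M_N(ℂ)` is differentiable satisfying the ODE
`A' t = -(1/2) A t * H' t * (H t)⁻¹` with `A 0 * H 0 * (A 0)ᴴ = 1`, then
`A t * H t * (A t)ᴴ = 1` for all `t`. -/
theorem stmt_3 (N : ℕ) (hN : 1 ≤ N)
    (H H' A A' : ℝ → Matrix (Fin N) (Fin N) ℂ)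
    (hHherm : ∀ t, (H t).IsHermitian)
    (hHinv : ∀ t, IsUnit (H t))
    (hH : ∀ t i j, HasDerivAt (fun s => H s i j) (H' t i j) t)
    (hA : ∀ t i j, HasDerivAt (fun s => A s i j) (A' t i j) t)
    (hODE : ∀ t, A' t = (-(1/2) : ℂ) • (A t * H' t * (H t)⁻¹))
    (hinit : A 0 * H 0 * (A 0)ᴴ = 1) :
    ∀ t, A t * H t * (A t)ᴴ = 1 := by
  have hH' : ∀ t, (H' t)ᴴ = H' t := by
    intro t
    ext i j
    have h1 := entry_star hH t i j
    have h2 : (fun s => (H s)ᴴ i j) = fun s => H s i j := by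
      funext s
      rw [(hHherm s).eq]
    rw [h2] at h1
    exact h1.unique (hH t i j)
  have hD := entry_mul (P := fun s => A s * H s) (Q := fun s => (A s)ᴴ)
    (P' := fun t => A' t * H t + A t * H' t) (Q' := fun t => (A' t)ᴴ)
    (entry_mul hA hH) (entry_star hA)
  have hz : ∀ t, (A' t * H t + A t * H' t) * (A t)ᴴ + A t * H t * (A' t)ᴴ = 0 := by
    intro t
    have hu : IsUnit (H t).det := (Matrix.isUnit_iff_isUnit_det _).1 (hHinv t)
    have h1 : A' t * H t = (-(1/2) : ℂ) • (A t * H' t) := by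
      rw [hODE, Matrix.smul_mul, Matrix.nonsing_inv_mul_cancel_right _ _ hu]
    have h2 : H t * (A' t)ᴴ = (-(1/2) : ℂ) • (H' t * (A t)ᴴ) := by
      have h3 := congrArg Matrix.conjTranspose h1
      rw [Matrix.conjTranspose_mul, Matrix.conjTranspose_smul, Matrix.conjTranspose_mul,
        hH', (hHherm t).eq] at h3
      simpa using h3
    rw [Matrix.mul_assoc (A t), h2, h1, Matrix.add_mul, Matrix.smul_mul, Matrix.mul_smul,
      Matrix.mul_assoc]
    module
  intro t
  rw [← hinit]
  ext i j
  refine is_const_of_deriv_eq_zero (f := fun s => (A s * H s * (A s)ᴴ) i j)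
    (fun s => (hD s i j).differentiableAt) (fun s => ?_) t 0
  rw [(hD s i j).deriv]
  simp only [hz]
  rfl
end

section
/- Let Δ ⊂ ℝⁿ be a compact measurable set, π : ℝⁿ → ℝ a continuous function with π(y) ≥ 0 for y ∈ Δ and ∫_Δ π(y) dy > 0, and κ ∈ ℝⁿ a fixed vector; let F(Λ) = log ∫_Δ e^{⟨Λ, κ − y⟩} π(y) dy. Let C ⊆ ℝⁿ be a convex set and Λ₀ ∈ C. Define I(Λ) = ∫_Δ ⟨Λ, κ − y⟩ e^{⟨Λ₀, κ − y⟩} π(y) dy. If I(Λ) ≥ 0 for every Λ ∈ C, and I(Λ₀) = 0, then F(Λ₀) ≤ F(Λ) for every Λ ∈ C, i.e. F attains its minimum over C at Λ₀. -/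
open MeasureTheory

/-- In the setting of Statement 10, let `C ⊆ ℝⁿ` be convex, `Λ₀ ∈ C`, and
`I(Λ) = ∫_Δ ⟨Λ, κ - y⟩ e^{⟨Λ₀, κ - y⟩} π dy`. If `I(Λ) ≥ 0` for all `Λ ∈ C` and
`I(Λ₀) = 0`, then `F(Λ) = log ∫_Δ e^{⟨Λ, κ - y⟩} π dy` attains its minimum over `C`
at `Λ₀`. -/
theorem stmt_13 (n : ℕ) (Δ : Set (Fin n → ℝ)) (hΔc : IsCompact Δ) (hΔm : MeasurableSet Δ)
    (π : (Fin n → ℝ) → ℝ) (hπcont : Continuous π) (hπnn : ∀ y ∈ Δ, 0 ≤ π y)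
    (hπpos : 0 < ∫ y in Δ, π y) (κ : Fin n → ℝ)
    (C : Set (Fin n → ℝ)) (hC : Convex ℝ C) (Λ₀ : Fin n → ℝ) (hΛ₀ : Λ₀ ∈ C)
    (hI : ∀ Λ ∈ C,
      0 ≤ ∫ y in Δ, (∑ i, Λ i * (κ i - y i)) * Real.exp (∑ i, Λ₀ i * (κ i - y i)) * π y)
    (hI0 : (∫ y in Δ,
      (∑ i, Λ₀ i * (κ i - y i)) * Real.exp (∑ i, Λ₀ i * (κ i - y i)) * π y) = 0) :
    ∀ Λ ∈ C,
      Real.log (∫ y in Δ, Real.exp (∑ i, Λ₀ i * (κ i - y i)) * π y) ≤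
        Real.log (∫ y in Δ, Real.exp (∑ i, Λ i * (κ i - y i)) * π y) := by
  intro Λ hΛ
  have hint : ∀ f : (Fin n → ℝ) → ℝ, Continuous f → IntegrableOn f Δ :=
    fun f hf => hf.continuousOn.integrableOn_compact hΔc
  have h1 : IntegrableOn (fun y => Real.exp (∑ i, Λ₀ i * (κ i - y i)) * π y) Δ :=
    hint _ (by fun_prop)
  have h2 : IntegrableOn (fun y => Real.exp (∑ i, Λ i * (κ i - y i)) * π y) Δ :=
    hint _ (by fun_prop)
  have h3 : IntegrableOn (fun y => (∑ i, Λ i * (κ i - y i)) *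
      Real.exp (∑ i, Λ₀ i * (κ i - y i)) * π y) Δ := hint _ (by fun_prop)
  have h4 : IntegrableOn (fun y => (∑ i, Λ₀ i * (κ i - y i)) *
      Real.exp (∑ i, Λ₀ i * (κ i - y i)) * π y) Δ := hint _ (by fun_prop)
  have hpos : 0 < ∫ y in Δ, Real.exp (∑ i, Λ₀ i * (κ i - y i)) * π y := by
    have hnn : 0 ≤ᵐ[volume.restrict Δ] π :=
      (ae_restrict_iff' hΔm).2 (Filter.Eventually.of_forall hπnn)
    have hnn' : 0 ≤ᵐ[volume.restrict Δ] fun y => Real.exp (∑ i, Λ₀ i * (κ i - y i)) * π y :=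
      (ae_restrict_iff' hΔm).2 (Filter.Eventually.of_forall
        fun y hy => mul_nonneg (Real.exp_pos _).le (hπnn y hy))
    rw [setIntegral_pos_iff_support_of_nonneg_ae hnn (hint _ hπcont)] at hπpos
    rw [setIntegral_pos_iff_support_of_nonneg_ae hnn' h1]
    have hs : Function.support (fun y => Real.exp (∑ i, Λ₀ i * (κ i - y i)) * π y) =
        Function.support π := by
      ext y
      simp [Real.exp_ne_zero]
    rwa [hs]
  apply Real.log_le_log hpos
  have key : ∫ y in Δ, ((Real.exp (∑ i, Λ₀ i * (κ i - y i)) * π y +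
      (∑ i, Λ i * (κ i - y i)) * Real.exp (∑ i, Λ₀ i * (κ i - y i)) * π y) -
      (∑ i, Λ₀ i * (κ i - y i)) * Real.exp (∑ i, Λ₀ i * (κ i - y i)) * π y) ≤
      ∫ y in Δ, Real.exp (∑ i, Λ i * (κ i - y i)) * π y := by
    refine setIntegral_mono_on ((h1.add h3).sub h4) h2 hΔm fun y hy => ?_
    generalize (∑ i, Λ i * (κ i - y i)) = a
    generalize (∑ i, Λ₀ i * (κ i - y i)) = b
    have hexp : Real.exp b * (a - b + 1) ≤ Real.exp a := by
      calc Real.exp b * (a - b + 1) ≤ Real.exp b * Real.exp (a - b) :=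
            mul_le_mul_of_nonneg_left (Real.add_one_le_exp _) (Real.exp_pos _).le
        _ = Real.exp a := by rw [← Real.exp_add]; congr 1; ring
    have := mul_le_mul_of_nonneg_right hexp (hπnn y hy)
    linarith
  rw [integral_sub (hint _ (by fun_prop)) h4, integral_add h1 h3, hI0] at key
  linarith [hI Λ hΛ]
end
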